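/- Let p ∈ [0,1]^S, q ∈ ℝ^S, and P = P_p. Then for every k ∈ {1,…,m}, E_{X∼P}[F(X,q)_k] − q_k = Pr_P[Π_k]·(p_k − q_k). -/

import Mathlib

open scoped BigOperators Classical

/-- The index set `S` of parental configurations: pairs `(i, a)` where
`a : Parents i → Bool`. -/
abbrev BNIdx (d : ℕ) (Par : Fin d → Finset (Fin d)) :=
  (i : Fin d) × ({j : Fin d // j ∈ Par i} → Bool)

/-- The restriction of `x ∈ {0,1}^d` to the parents of node `i`. -/
def cfgOf {d : ℕ} (Par : Fin d → Finset (Fin d)) (x : Fin d → Bool) (i : Fin d) :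
    {j : Fin d // j ∈ Par i} → Bool :=
  fun j => x j.1

/-- The Bayesian network `P_p` with conditional probability table `p`. -/
noncomputable def bnDist {d : ℕ} (Par : Fin d → Finset (Fin d))
    (p : BNIdx d Par → ℝ) (x : Fin d → Bool) : ℝ :=
  ∏ i : Fin d, if x i then p ⟨i, cfgOf Par x i⟩ else 1 - p ⟨i, cfgOf Par x i⟩

/-- `Pr_R[Π_k]`, the probability of the parental configuration `k` under `R`. -/
noncomputable def prCfg {d : ℕ} (Par : Fin d → Finset (Fin d))
    (R : (Fin d → Bool) → ℝ) (k : BNIdx d Par) : ℝ :=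
  ∑ x : Fin d → Bool, if cfgOf Par x k.1 = k.2 then R x else 0

/-- Probability of an event `A` under `R`. -/
noncomputable def prEvent {d : ℕ} (R : (Fin d → Bool) → ℝ)
    (A : (Fin d → Bool) → Prop) : ℝ :=
  ∑ x : Fin d → Bool, if A x then R x else 0

/-- Expectation `E_{X ∼ R}[g(X)]`. -/
noncomputable def expec {d : ℕ} (R : (Fin d → Bool) → ℝ)
    (g : (Fin d → Bool) → ℝ) : ℝ :=
  ∑ x : Fin d → Bool, R x * g x

/-- The vector `F(x, q) ∈ ℝ^S`. -/
noncomputable def Fvec {d : ℕ} (Par : Fin d → Finset (Fin d))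
    (x : Fin d → Bool) (q : BNIdx d Par → ℝ) (k : BNIdx d Par) : ℝ :=
  if cfgOf Par x k.1 = k.2 then (if x k.1 then 1 else 0) else q k

/-- `R` is a probability distribution on the finite set `D`. -/
def IsProbDist {D : Type*} [Fintype D] (R : D → ℝ) : Prop :=
  (∀ x, 0 ≤ R x) ∧ ∑ x, R x = 1

/-- Total variation distance. -/
noncomputable def dTV {D : Type*} [Fintype D] (A B : D → ℝ) : ℝ :=
  (∑ x, |A x - B x|) / 2

/-- Squared Hellinger distance `d_H(A,B)² = 1 - Σ √(A(x)·B(x))`. -/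
noncomputable def hellingerSq {D : Type*} [Fintype D] (A B : D → ℝ) : ℝ :=
  1 - ∑ x, Real.sqrt (A x * B x)

/-- Euclidean norm on `ℝ^ι`. -/
noncomputable def enorm2 {ι : Type*} [Fintype ι] (v : ι → ℝ) : ℝ :=
  Real.sqrt (∑ k, v k ^ 2)

/-- The second-moment matrix `M_R` (relative to `q`). -/
noncomputable def covM {d : ℕ} (Par : Fin d → Finset (Fin d))
    (R : (Fin d → Bool) → ℝ) (q : BNIdx d Par → ℝ) :
    Matrix (BNIdx d Par) (BNIdx d Par) ℝ :=
  fun k l => expec R (fun x => (Fvec Par x q k - q k) * (Fvec Par x q l - q l))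

/-- `M_R^0`: the matrix `M_R` with zeroed diagonal. -/
noncomputable def covM0 {d : ℕ} (Par : Fin d → Finset (Fin d))
    (R : (Fin d → Bool) → ℝ) (q : BNIdx d Par → ℝ) :
    Matrix (BNIdx d Par) (BNIdx d Par) ℝ :=
  fun k l => if k = l then 0 else covM Par R q k l

/-- Spectral norm (ℓ²-operator norm) of a real matrix. -/
noncomputable def specNorm {ι : Type*} [Fintype ι] [DecidableEq ι]
    (M : Matrix ι ι ℝ) : ℝ :=
  ‖Matrix.toEuclideanCLM (𝕜 := ℝ) M‖


noncomputable def bnW {d : ℕ} (Par : Fin d → Finset (Fin d))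
    (p : BNIdx d Par → ℝ) (x : Fin d → Bool) (i : Fin d) : ℝ :=
  if x i then p ⟨i, cfgOf Par x i⟩ else 1 - p ⟨i, cfgOf Par x i⟩

def bnFlip {d : ℕ} (n : Fin d) (x : Fin d → Bool) : Fin d → Bool :=
  fun j => if j = n then !(x j) else x j

theorem bnFlip_invol {d : ℕ} (n : Fin d) : Function.Involutive (bnFlip n) := by
  intro x
  funext j
  unfold bnFlip
  by_cases h : j = n <;> simp [h]

theorem bn_sum_flip {d : ℕ} (n : Fin d) (f : (Fin d → Bool) → ℝ) :
    2 * ∑ x, f x = ∑ x, (f x + f (bnFlip n x)) := by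
  have h : ∑ x, f (bnFlip n x) = ∑ x, f x :=
    Equiv.sum_comp (bnFlip_invol n).toPerm f
  rw [Finset.sum_add_distrib, h]; ring

theorem cfgOf_flip {d : ℕ} (Par : Fin d → Finset (Fin d))
    (hpar : ∀ i : Fin d, ∀ j ∈ Par i, j < i) (n i : Fin d) (hi : i ≤ n)
    (x : Fin d → Bool) : cfgOf Par (bnFlip n x) i = cfgOf Par x i := by
  funext j
  have h := hpar i j.1 j.2
  have : j.1 ≠ n := ne_of_lt (lt_of_lt_of_le h hi)
  simp [cfgOf, bnFlip, this]

theorem bnW_flip_lt {d : ℕ} (Par : Fin d → Finset (Fin d))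
    (hpar : ∀ i : Fin d, ∀ j ∈ Par i, j < i) (p : BNIdx d Par → ℝ) (n i : Fin d) (hi : i < n)
    (x : Fin d → Bool) : bnW Par p (bnFlip n x) i = bnW Par p x i := by
  unfold bnW
  rw [cfgOf_flip Par hpar n i hi.le]
  simp [bnFlip, hi.ne]

theorem bnW_flip_self {d : ℕ} (Par : Fin d → Finset (Fin d))
    (hpar : ∀ i : Fin d, ∀ j ∈ Par i, j < i) (p : BNIdx d Par → ℝ) (n : Fin d)
    (x : Fin d → Bool) : bnW Par p (bnFlip n x) n =
      if x n then 1 - p ⟨n, cfgOf Par x n⟩ else p ⟨n, cfgOf Par x n⟩ := by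
  unfold bnW
  rw [cfgOf_flip Par hpar n n le_rfl]
  cases h : x n <;> simp [bnFlip, h]

noncomputable def bnA {d : ℕ} (Par : Fin d → Finset (Fin d))
    (p : BNIdx d Par → ℝ) (n : ℕ) (g : (Fin d → Bool) → ℝ) : ℝ :=
  ∑ x, (∏ i ∈ Finset.univ.filter (fun i : Fin d => i.val < n), bnW Par p x i) * g x

theorem bnA_step {d : ℕ} (Par : Fin d → Finset (Fin d))
    (hpar : ∀ i : Fin d, ∀ j ∈ Par i, j < i) (p : BNIdx d Par → ℝ) (n : Fin d)
    (g : (Fin d → Bool) → ℝ) :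
    2 * bnA Par p (n.val + 1) g =
      bnA Par p n.val (fun x => bnW Par p x n * g x
        + bnW Par p (bnFlip n x) n * g (bnFlip n x)) := by
  unfold bnA
  rw [bn_sum_flip n]
  refine Finset.sum_congr rfl fun x _ => ?_
  have hf : Finset.univ.filter (fun i : Fin d => i.val < n.val + 1)
      = insert n (Finset.univ.filter (fun i : Fin d => i.val < n.val)) := by
    ext i
    simp [Fin.ext_iff]; omega
  have hn : n ∉ Finset.univ.filter (fun i : Fin d => i.val < n.val) := by simp
  rw [hf, Finset.prod_insert hn, Finset.prod_insert hn]
  have : ∏ i ∈ Finset.univ.filter (fun i : Fin d => i.val < n.val), bnW Par p (bnFlip n x) i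
      = ∏ i ∈ Finset.univ.filter (fun i : Fin d => i.val < n.val), bnW Par p x i :=
    Finset.prod_congr rfl fun i hi =>
      bnW_flip_lt Par hpar p n i (Fin.lt_def.2 (by simpa using hi)) x
  rw [this]; ring

theorem bnA_all {d : ℕ} (Par : Fin d → Finset (Fin d))
    (hpar : ∀ i : Fin d, ∀ j ∈ Par i, j < i) (p : BNIdx d Par → ℝ)
    (g : (Fin d → Bool) → ℝ) (n m : ℕ) (hm : n + m ≤ d)
    (hg : ∀ j : Fin d, n ≤ j.val → ∀ x, g (bnFlip j x) = g x) :
    2 ^ m * bnA Par p (n + m) g = bnA Par p n g := by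
  induction m with
  | zero => simp
  | succ m ih =>
    rw [← ih (by omega)]
    have h := bnA_step Par hpar p ⟨n + m, by omega⟩ g
    have h2 : (fun x => bnW Par p x ⟨n + m, by omega⟩ * g x
        + bnW Par p (bnFlip ⟨n + m, by omega⟩ x) ⟨n + m, by omega⟩
          * g (bnFlip ⟨n + m, by omega⟩ x)) = g := by
      funext x
      rw [hg _ (by simp), bnW_flip_self Par hpar]
      unfold bnW
      split_ifs <;> ring
    rw [h2] at h
    simp only at h
    rw [← h, ← add_assoc, pow_succ]; ring

theorem bnA_d {d : ℕ} (Par : Fin d → Finset (Fin d)) (p : BNIdx d Par → ℝ)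
    (g : (Fin d → Bool) → ℝ) : bnA Par p d g = ∑ x, bnDist Par p x * g x := by
  unfold bnA bnDist bnW
  simp

theorem bn_sum_one {d : ℕ} (Par : Fin d → Finset (Fin d))
    (hpar : ∀ i : Fin d, ∀ j ∈ Par i, j < i) (p : BNIdx d Par → ℝ) :
    ∑ x, bnDist Par p x = 1 := by
  have h := bnA_all Par hpar p (fun _ => 1) 0 d (by omega) (fun _ _ _ => rfl)
  rw [zero_add, bnA_d] at h
  simp [bnA] at h
  exact h

theorem bn_center {d : ℕ} (Par : Fin d → Finset (Fin d))
    (hpar : ∀ i : Fin d, ∀ j ∈ Par i, j < i) (p : BNIdx d Par → ℝ) (k : BNIdx d Par) :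
    ∑ x, bnDist Par p x *
      (if cfgOf Par x k.1 = k.2 then (if x k.1 then 1 else 0) - p k else 0) = 0 := by
  obtain ⟨i, a⟩ := k
  have hi := i.2
  set g : (Fin d → Bool) → ℝ := fun x =>
    if cfgOf Par x i = a then (if x i then 1 else 0) - p ⟨i, a⟩ else 0 with hgdef
  have h := bnA_all Par hpar p g (i.val + 1) (d - (i.val + 1)) (by omega) (by
    intro j hj x
    have hij : i < j := Fin.lt_def.2 (by omega)
    simp only [hgdef]
    rw [cfgOf_flip Par hpar j i hij.le]
    simp [bnFlip, hij.ne])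
  rw [show i.val + 1 + (d - (i.val + 1)) = d by omega, bnA_d] at h
  have h3 := bnA_step Par hpar p i g
  have h2 : (fun x => bnW Par p x i * g x + bnW Par p (bnFlip i x) i * g (bnFlip i x))
      = fun _ => 0 := by
    funext x
    rw [bnW_flip_self Par hpar]
    simp only [hgdef]
    rw [cfgOf_flip Par hpar i i le_rfl]
    unfold bnW
    by_cases hc : cfgOf Par x i = a
    · cases hx : x i <;> simp [hc, hx, bnFlip] <;> ring
    · simp [hc]
  rw [h2] at h3
  have h4 : bnA Par p (i.val + 1) g = 0 := by
    simp [bnA] at h3 ⊢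
    exact h3
  rw [h4] at h
  exact (mul_eq_zero.1 h).resolve_left (by positivity)

theorem mean_of_Fvec_sub_q
    (d : ℕ) (hd : 1 ≤ d) (Par : Fin d → Finset (Fin d))
    (hpar : ∀ i : Fin d, ∀ j ∈ Par i, j < i)
    (p : BNIdx d Par → ℝ) (hp : ∀ k, p k ∈ Set.Icc (0:ℝ) 1)
    (q : BNIdx d Par → ℝ) (k : BNIdx d Par) :
    expec (bnDist Par p) (fun x => Fvec Par x q k) - q k
      = prCfg Par (bnDist Par p) k * (p k - q k) := by
  have h1 := bn_sum_one Par hpar p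
  have h2 := bn_center Par hpar p k
  have h3 : q k = ∑ x, bnDist Par p x * q k := by rw [← Finset.sum_mul, h1, one_mul]
  unfold expec prCfg
  suffices hs : (∑ x, bnDist Par p x * Fvec Par x q k) - (∑ x, bnDist Par p x * q k)
      - (∑ x, if cfgOf Par x k.1 = k.2 then bnDist Par p x else 0) * (p k - q k)
      = ∑ x, bnDist Par p x *
      (if cfgOf Par x k.1 = k.2 then (if x k.1 then 1 else 0) - p k else 0) by
    rw [h2, ← h3] at hs
    exact sub_eq_zero.1 hs
  rw [Finset.sum_mul, ← Finset.sum_sub_distrib, ← Finset.sum_sub_distrib]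
  refine Finset.sum_congr rfl fun x _ => ?_
  unfold Fvec
  by_cases hc : cfgOf Par x k.1 = k.2
  · simp only [hc, if_true]; ring
  · simp only [hc, if_false]; ring
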